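/- arXiv:2311.00185 — 3 statements merged into one kernel-verified Lean document; each statement's English description precedes it below -/
import Mathlib

section
/- Let n ≥ 1, let P ⊆ [0,1]^n be a convex set, let j ∈ {1,…,n}, a ∈ {0,1}, and k ≥ 1. Then L^k(P) ∩ {x : x_j = a} = L^k(P ∩ {x : x_j = a}). -/
open Set

def cube (n : ℕ) : Set (Fin n → ℝ) := {x | ∀ i, 0 ≤ x i ∧ x i ≤ 1}

def Lop (n : ℕ) (P : Set (Fin n → ℝ)) : Set (Fin n → ℝ) :=
  ⋂ i : Fin n, convexHull ℝ ((P ∩ {x | x i = 0}) ∪ (P ∩ {x | x i = 1}))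

def Lk (n : ℕ) : ℕ → Set (Fin n → ℝ) → Set (Fin n → ℝ)
  | 0, P => P
  | k + 1, P => Lop n (Lk n k P)

/-!
If `F` is a convex extreme subset of a convex set `C`, then a convex combination of points of `C`
that lies in `F` uses only points of `F`, so intersecting with `F` commutes with taking the convex
hull of any subset of `C`, and hence with `Lop` and its iterates. The theorem is the case of the
slab `0 ≤ x j ≤ 1` and its face `x j = a`.
-/

section Extreme

variable {𝕜 E G : Type*} [Semiring 𝕜] [PartialOrder 𝕜] [AddCommMonoid E] [Module 𝕜 E]

theorem isExtreme_preimage [AddCommMonoid G] [Module 𝕜 G] {A B : Set G} (f : E →ₗ[𝕜] G)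
    (hAB : IsExtreme 𝕜 A B) : IsExtreme 𝕜 (f ⁻¹' A) (f ⁻¹' B) where
  subset := preimage_mono hAB.subset
  left_mem_of_mem_openSegment x hx y hy z hz hzxy := by
    have hfz : f z ∈ openSegment 𝕜 (f x) (f y) := by
      obtain ⟨u, v, hu, hv, huv, rfl⟩ := hzxy
      exact ⟨u, v, hu, hv, huv, by simp only [map_add, map_smul]⟩
    exact hAB.left_mem_of_mem_openSegment hx hy hz hfz

theorem convex_setOf_mem_imp_mem [ZeroLEOneClass 𝕜] {C F D : Set E} (hC : Convex 𝕜 C)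
    (hF : IsExtreme 𝕜 C F) (hD : Convex 𝕜 D) : Convex 𝕜 {x ∈ C | x ∈ F → x ∈ D} := by
  rw [convex_iff_openSegment_subset]
  rintro x ⟨hxC, hxD⟩ y ⟨hyC, hyD⟩ z hz
  refine ⟨hC.openSegment_subset hxC hyC hz, fun hzF ↦ hD.openSegment_subset ?_ ?_ hz⟩
  · exact hxD (hF.left_mem_of_mem_openSegment hxC hyC hzF hz)
  · exact hyD (hF.right_mem_of_mem_openSegment hxC hyC hzF hz)

theorem convexHull_inter_of_isExtreme [ZeroLEOneClass 𝕜] {C F S : Set E} (hC : Convex 𝕜 C)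
    (hF : IsExtreme 𝕜 C F) (hFconv : Convex 𝕜 F) (hS : S ⊆ C) :
    convexHull 𝕜 S ∩ F = convexHull 𝕜 (S ∩ F) := by
  apply Subset.antisymm
  · have hull_subset : convexHull 𝕜 S ⊆ {x ∈ C | x ∈ F → x ∈ convexHull 𝕜 (S ∩ F)} :=
      convexHull_min (fun x hx ↦ ⟨hS hx, fun hxF ↦ subset_convexHull 𝕜 _ ⟨hx, hxF⟩⟩)
        (convex_setOf_mem_imp_mem hC hF (convex_convexHull 𝕜 _))
    exact fun x hx ↦ (hull_subset hx.1).2 hx.2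
  · exact subset_inter (convexHull_mono inter_subset_left)
      (convexHull_min inter_subset_right hFconv)

end Extreme

section LiftAndProject

variable {n : ℕ} [NeZero n] {C F P : Set (Fin n → ℝ)}

theorem Lop_subset (hC : Convex ℝ C) (hP : P ⊆ C) : Lop n P ⊆ C :=
  iInter_subset_of_subset 0 <| convexHull_min
    (union_subset (inter_subset_left.trans hP) (inter_subset_left.trans hP)) hC

theorem Lk_subset (hC : Convex ℝ C) (hP : P ⊆ C) : ∀ k, Lk n k P ⊆ C
  | 0 => hP
  | k + 1 => Lop_subset hC (Lk_subset hC hP k)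

theorem Lop_inter_of_isExtreme (hC : Convex ℝ C) (hF : IsExtreme ℝ C F) (hFconv : Convex ℝ F)
    (hP : P ⊆ C) : Lop n P ∩ F = Lop n (P ∩ F) := by
  rw [Lop, Lop, iInter_inter]
  refine iInter_congr fun i ↦ ?_
  rw [convexHull_inter_of_isExtreme hC hF hFconv
    (union_subset (inter_subset_left.trans hP) (inter_subset_left.trans hP)),
    union_inter_distrib_right, inter_right_comm P _ F, inter_right_comm P _ F]

theorem Lk_inter_of_isExtreme (hC : Convex ℝ C) (hF : IsExtreme ℝ C F) (hFconv : Convex ℝ F)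
    (hP : P ⊆ C) (k : ℕ) : Lk n k P ∩ F = Lk n k (P ∩ F) := by
  induction k with
  | zero => rfl
  | succ k ih => rw [Lk, Lk, ← ih, Lop_inter_of_isExtreme hC hF hFconv (Lk_subset hC hP k)]

end LiftAndProject

section CoordinateSlab

variable {ι : Type*}

theorem convex_setOf_apply_mem (j : ι) {s : Set ℝ} (hs : Convex ℝ s) :
    Convex ℝ {x : ι → ℝ | x j ∈ s} :=
  hs.linear_preimage (LinearMap.proj j : (ι → ℝ) →ₗ[ℝ] ℝ)

theorem isExtreme_setOf_apply_eq (j : ι) {s : Set ℝ} {a : ℝ} (ha : a ∈ s.extremePoints ℝ) :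
    IsExtreme ℝ {x : ι → ℝ | x j ∈ s} {x | x j = a} :=
  isExtreme_preimage (LinearMap.proj j : (ι → ℝ) →ₗ[ℝ] ℝ) (isExtreme_singleton.2 ha)

end CoordinateSlab

theorem stmt1_general {n : ℕ} {P : Set (Fin n → ℝ)} {j : Fin n} {s : Set ℝ} {a : ℝ}
    (hs : Convex ℝ s) (ha : a ∈ s.extremePoints ℝ) (hP : ∀ x ∈ P, x j ∈ s) (k : ℕ) :
    Lk n k P ∩ {x | x j = a} = Lk n k (P ∩ {x | x j = a}) := by
  have : NeZero n := ⟨j.pos.ne'⟩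
  exact Lk_inter_of_isExtreme (convex_setOf_apply_mem j hs) (isExtreme_setOf_apply_eq j ha)
    (convex_setOf_apply_mem j (convex_singleton a)) hP k

theorem stmt1 (n : ℕ) (hn : 1 ≤ n) (P : Set (Fin n → ℝ)) (hPcube : P ⊆ cube n)
    (hPconv : Convex ℝ P) (j : Fin n) (a : ℝ) (ha : a = 0 ∨ a = 1) (k : ℕ) (hk : 1 ≤ k) :
    Lk n k P ∩ {x | x j = a} = Lk n k (P ∩ {x | x j = a}) :=
  stmt1_general (convex_Icc 0 1) (by rwa [extremePoints_Icc zero_le_one])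
    (fun _ hx ↦ hPcube hx j) k
end

section
/- Let G be a simple graph on vertex set {1,…,n} (n ≥ 1) with clique number k, and let P_G be its fractional clique polytope. Then for every permutation π of {1,…,n}, 𝒯^{π,k}(P_G) = conv(P_G ∩ {0,1}^n). -/
open Set

def corners (n : ℕ) : Set (Fin n → ℝ) := {x | ∀ i, x i = 0 ∨ x i = 1}

/-- The fractional clique polytope of a graph `G` on vertex set `Fin n`. -/
def fracClique (n : ℕ) (G : SimpleGraph (Fin n)) : Set (Fin n → ℝ) :=
  {x | (∀ v, 0 ≤ x v) ∧ ∀ u v : Fin n, u ≠ v → ¬ G.Adj u v → x u + x v ≤ 1}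

/-- Branching trees over the index set `Fin n`. -/
inductive BTree (n : ℕ) : Type
  | leaf : BTree n
  | node : Fin n → BTree n → BTree n → BTree n

/-- The list of leaves of a tree, each recorded as the pair `(J⁰, J¹)` of sets of indices
fixed to `0` resp. `1` on the path from the root to the leaf. -/
def leavesJ {n : ℕ} : BTree n → Finset (Fin n) → Finset (Fin n) →
    List (Finset (Fin n) × Finset (Fin n))
  | .leaf, J0, J1 => [(J0, J1)]
  | .node j t0 t1, J0, J1 => leavesJ t0 (insert j J0) J1 ++ leavesJ t1 J0 (insert j J1)

/-- The skewed `k`-tree construction. -/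
def skew {n : ℕ} (k : ℕ) : List (Fin n) → ℕ → BTree n
  | [], _ => .leaf
  | j :: l, c => if c < k then .node j (skew k l c) (skew k l (c + 1)) else .leaf

/-- The skewed `k`-tree `𝒯^{π,k}` for a permutation `π` of the indices. -/
def skewTree (n k : ℕ) (π : Equiv.Perm (Fin n)) : BTree n :=
  skew k ((List.finRange n).map π) 0

/-- The atom of a leaf `p = (J⁰, J¹)`. -/
def atom (n : ℕ) (P : Set (Fin n → ℝ)) (p : Finset (Fin n) × Finset (Fin n)) :
    Set (Fin n → ℝ) :=
  P ∩ {x | (∀ j ∈ p.1, x j = 0) ∧ ∀ j ∈ p.2, x j = 1}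

/-- `𝒯(P)`: the convex hull of the union of the atoms of the leaves of `𝒯`. -/
def treeSet (n : ℕ) (T : BTree n) (P : Set (Fin n → ℝ)) : Set (Fin n → ℝ) :=
  convexHull ℝ (⋃ p ∈ leavesJ T ∅ ∅, atom n P p)

/-!
A 0/1 point follows exactly one path down a branching tree, so the atoms of the leaves always cover
the 0/1 points of `P`; hence `𝒯(P) = conv(P ∩ {0,1}ⁿ)` as soon as every atom is integral. A leaf
of the skewed tree is reached either after all indices have been fixed, where integrality is clear,
or after `k` indices have been fixed to `1`. In the latter case the indices fixed to `1` form a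
clique, and any further index with `0 < x i` could be added to it; since no clique has more than
`k` vertices, all other coordinates vanish.
-/

section BranchingTree

variable {n : ℕ} {P : Set (Fin n → ℝ)} {J0 J1 : Finset (Fin n)} {x : Fin n → ℝ}

theorem mem_atom_insert_left {j : Fin n} :
    x ∈ atom n P (insert j J0, J1) ↔ x ∈ atom n P (J0, J1) ∧ x j = 0 := by
  simp only [atom, mem_inter_iff, mem_ofPred_eq, Finset.forall_mem_insert]
  tauto

theorem mem_atom_insert_right {j : Fin n} :
    x ∈ atom n P (J0, insert j J1) ↔ x ∈ atom n P (J0, J1) ∧ x j = 1 := by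
  simp only [atom, mem_inter_iff, mem_ofPred_eq, Finset.forall_mem_insert]
  tauto

theorem atom_empty : atom n P (∅, ∅) = P := by
  simp [atom]

theorem atom_subset_corners_of_forall_mem {p : Finset (Fin n) × Finset (Fin n)}
    (hp : ∀ j, j ∈ p.1 ∨ j ∈ p.2) : atom n P p ⊆ corners n :=
  fun _ ⟨_, h0, h1⟩ j ↦ (hp j).imp (h0 j) (h1 j)

theorem exists_mem_leavesJ_mem_atom (T : BTree n) (hx : x ∈ corners n)
    (hxJ : x ∈ atom n P (J0, J1)) : ∃ p ∈ leavesJ T J0 J1, x ∈ atom n P p := by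
  induction T generalizing J0 J1 with
  | leaf => exact ⟨(J0, J1), List.mem_singleton_self _, hxJ⟩
  | node j t0 t1 ih0 ih1 =>
    rcases hx j with hj | hj
    · obtain ⟨p, hp, hxp⟩ := ih0 (mem_atom_insert_left.2 ⟨hxJ, hj⟩)
      exact ⟨p, List.mem_append_left _ hp, hxp⟩
    · obtain ⟨p, hp, hxp⟩ := ih1 (mem_atom_insert_right.2 ⟨hxJ, hj⟩)
      exact ⟨p, List.mem_append_right _ hp, hxp⟩

theorem treeSet_eq_convexHull_inter_corners {T : BTree n}
    (hT : ∀ p ∈ leavesJ T ∅ ∅, atom n P p ⊆ corners n) :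
    treeSet n T P = convexHull ℝ (P ∩ corners n) := by
  refine congrArg (convexHull ℝ) (Subset.antisymm ?_ ?_)
  · exact iUnion₂_subset fun p hp ↦ subset_inter inter_subset_left (hT p hp)
  · rintro x ⟨hxP, hx⟩
    obtain ⟨p, hp, hxp⟩ := exists_mem_leavesJ_mem_atom T hx (atom_empty.ge hxP)
    exact mem_iUnion₂.2 ⟨p, hp, hxp⟩

theorem subset_of_mem_leavesJ {T : BTree n} {p : Finset (Fin n) × Finset (Fin n)}
    (hp : p ∈ leavesJ T J0 J1) : J0 ⊆ p.1 ∧ J1 ⊆ p.2 := by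
  induction T generalizing J0 J1 with
  | leaf =>
    obtain rfl := List.mem_singleton.1 hp
    exact ⟨subset_rfl, subset_rfl⟩
  | node j t0 t1 ih0 ih1 =>
    rcases List.mem_append.1 hp with hp | hp
    · exact (ih0 hp).imp_left (Finset.subset_insert j J0).trans
    · exact (ih1 hp).imp_right (Finset.subset_insert j J1).trans

theorem le_card_or_forall_mem_of_mem_leavesJ_skew {k c : ℕ} {l : List (Fin n)} (hl : l.Nodup)
    (hlJ : ∀ j ∈ l, j ∉ J1) (hc : c ≤ J1.card) {p : Finset (Fin n) × Finset (Fin n)}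
    (hp : p ∈ leavesJ (skew k l c) J0 J1) : k ≤ p.2.card ∨ ∀ j ∈ l, j ∈ p.1 ∨ j ∈ p.2 := by
  induction l generalizing c J0 J1 with
  | nil => exact .inr (List.forall_mem_nil _)
  | cons a l ih =>
    obtain ⟨hal, hl⟩ := List.nodup_cons.1 hl
    obtain ⟨haJ, hlJ⟩ := List.forall_mem_cons.1 hlJ
    rw [skew] at hp
    split_ifs at hp with hck
    · rcases List.mem_append.1 hp with hp | hp
      · have ha : a ∈ p.1 := (subset_of_mem_leavesJ hp).1 (Finset.mem_insert_self a J0)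
        exact (ih hl hlJ hc hp).imp_right fun h ↦ List.forall_mem_cons.2 ⟨.inl ha, h⟩
      · have ha : a ∈ p.2 := (subset_of_mem_leavesJ hp).2 (Finset.mem_insert_self a J1)
        have hlJ' : ∀ j ∈ l, j ∉ insert a J1 := fun j hj ↦
          mt Finset.mem_insert.1 (not_or.2 ⟨ne_of_mem_of_not_mem hj hal, hlJ j hj⟩)
        have hc' : c + 1 ≤ (insert a J1).card := by
          rw [Finset.card_insert_of_notMem haJ]
          exact Nat.succ_le_succ hc
        exact (ih hl hlJ' hc' hp).imp_right fun h ↦ List.forall_mem_cons.2 ⟨.inr ha, h⟩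
    · obtain rfl := List.mem_singleton.1 hp
      exact .inl ((not_lt.1 hck).trans hc)

end BranchingTree

section FractionalClique

variable {n k : ℕ} {G : SimpleGraph (Fin n)}

theorem adj_of_one_lt_add {x : Fin n → ℝ} (hx : x ∈ fracClique n G) {u v : Fin n} (huv : u ≠ v)
    (h : 1 < x u + x v) : G.Adj u v :=
  not_imp_comm.1 (hx.2 u v huv) h.not_ge

theorem isClique_insert_setOf_eq_one_of_pos {x : Fin n → ℝ} (hx : x ∈ fracClique n G) {i : Fin n}
    (hi : 0 < x i) : G.IsClique (insert i {v | x v = 1}) := by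
  refine SimpleGraph.IsClique.insert (fun u hu v hv huv ↦ ?_) fun v hv hiv ↦ ?_
  · exact adj_of_one_lt_add hx huv (by rw [hu, hv]; norm_num)
  · exact adj_of_one_lt_add hx hiv (by rw [hv]; linarith)

theorem atom_fracClique_subset_corners_of_le_card (hG : G.CliqueFree (k + 1))
    {p : Finset (Fin n) × Finset (Fin n)} (hp : k ≤ p.2.card) :
    atom n (fracClique n G) p ⊆ corners n := by
  rintro x ⟨hx, -, h1⟩ i
  by_cases hip : i ∈ p.2
  · exact .inr (h1 i hip)
  refine .inl ((hx.1 i).eq_of_not_lt' fun hi ↦ ?_)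
  have hclique : G.IsClique (insert i p.2 : Finset (Fin n)) := by
    rw [Finset.coe_insert]
    exact (isClique_insert_setOf_eq_one_of_pos hx hi).subset (insert_subset_insert h1)
  have hcard : k + 1 ≤ (insert i p.2).card := by
    rw [Finset.card_insert_of_notMem hip]
    exact Nat.succ_le_succ hp
  exact hG.mono hcard _ ⟨hclique, rfl⟩

end FractionalClique

theorem stmt9_general {n k : ℕ} {G : SimpleGraph (Fin n)} (hG : G.CliqueFree (k + 1))
    (π : Equiv.Perm (Fin n)) :
    treeSet n (skewTree n k π) (fracClique n G) = convexHull ℝ (fracClique n G ∩ corners n) := by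
  refine treeSet_eq_convexHull_inter_corners fun p hp ↦ ?_
  have hnodup : ((List.finRange n).map π).Nodup := (List.nodup_finRange n).map π.injective
  have hmem (j : Fin n) : j ∈ (List.finRange n).map π :=
    List.mem_map.2 ⟨π.symm j, List.mem_finRange _, π.apply_symm_apply j⟩
  rcases le_card_or_forall_mem_of_mem_leavesJ_skew hnodup (fun j _ ↦ Finset.notMem_empty j)
    (Nat.zero_le _) hp with hcard | hfixed
  · exact atom_fracClique_subset_corners_of_le_card hG hcard
  · exact atom_subset_corners_of_forall_mem fun j ↦ hfixed j (hmem j)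

theorem stmt9 (n k : ℕ) (hn : 1 ≤ n) (G : SimpleGraph (Fin n))
    -- `k` is the clique number of `G`
    (hk_ex : ∃ K : Finset (Fin n), G.IsNClique k K)
    (hk_max : ∀ K : Finset (Fin n), G.IsClique (K : Set (Fin n)) → K.card ≤ k)
    (π : Equiv.Perm (Fin n)) :
    treeSet n (skewTree n k π) (fracClique n G) =
      convexHull ℝ (fracClique n G ∩ corners n) :=
  stmt9_general (fun K hK ↦ (hK.card_eq ▸ hk_max K hK.isClique).not_gt k.lt_succ_self) π
end

section
/- Let n ≥ 2 and let P := {x ∈ [0,1]^n : ∑_{j=1}^{n} x_j ≥ 1/2} (the no-good polytope of S = {0}). Then P_I = {x ∈ [0,1]^n : ∑_{j=1}^{n} x_j ≥ 1}, and there exists a point x̄ ∈ L^{n−1}(P) with ∑_{j=1}^{n} x̄_j < 1; in particular L^{n−1}(P) ≠ P_I. -/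
open Set

def integerHull (n : ℕ) (P : Set (Fin n → ℝ)) : Set (Fin n → ℝ) :=
  convexHull ℝ (P ∩ corners n)

/-!
Setting one coordinate to `1` is an affine map. If it maps a set of 0/1 points to itself, then it
maps the convex hull to itself, and by convexity the hull is closed under increasing coordinates
within the cube. A point of the cube with coordinate sum at least `1` lies above its
normalisation, which is a convex combination of unit vectors; this gives the integer hull.

For the iterates, fix `0 < s` and consider the points `p_T` with all coordinates in `T` equal to
`1 / (|T| + s)` and the others `0`. Their coordinate sum `|T| / (|T| + s)` is less than `1`, and for
`i ∈ T` the point `p_T` lies on the segment from `p_{T \ {i}}`, whose `i`-th coordinate is `0`, to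
the unit vector at `i`. Hence every application of the operator costs a single element of `T`: if
the polytope contains the unit vectors and all `p_T` with `T` nonempty, its `k`-th iterate contains
all `p_T` with `k < |T|`.
-/

section Cube

variable {n : ℕ}

lemma cube_eq_Icc : cube n = Icc 0 1 := by
  ext x
  simp only [cube, mem_ofPred_eq, mem_Icc, Pi.le_def, Pi.zero_apply, Pi.one_apply, forall_and]

lemma corners_subset_cube : corners n ⊆ cube n := by
  intro x hx i
  rcases hx i with h | h <;> simp [h]

lemma single_one_mem_corners (i : Fin n) : Pi.single i 1 ∈ corners n := by
  intro j
  rcases eq_or_ne j i with rfl | hj <;> simp [*]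

lemma update_one_mem_corners {x : Fin n → ℝ} (hx : x ∈ corners n) (i : Fin n) :
    Function.update x i 1 ∈ corners n := by
  intro j
  rcases eq_or_ne j i with rfl | hj
  · simp
  · simpa [hj] using hx j

end Cube

section UpperSet

variable {n : ℕ} {U : Set (Fin n → ℝ)}

lemma convex_preimage_update {ι : Type*} [DecidableEq ι] {S : Set (ι → ℝ)} (hS : Convex ℝ S)
    (i : ι) (c : ℝ) : Convex ℝ ((Function.update · i c) ⁻¹' S) := by
  intro x hx y hy a b ha hb hab
  have hcombo : Function.update (a • x + b • y) i c =
      a • Function.update x i c + b • Function.update y i c := by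
    rw [← Function.update_smul, ← Function.update_smul, ← Function.update_add,
      Convex.combo_self hab]
  simpa only [mem_preimage, hcombo] using hS hx hy ha hb hab

lemma update_one_mem_integerHull (hU : IsUpperSet U) {x : Fin n → ℝ}
    (hx : x ∈ integerHull n U) (i : Fin n) : Function.update x i 1 ∈ integerHull n U := by
  refine convexHull_min ?_ (convex_preimage_update (convex_convexHull ℝ _) i 1) hx
  rintro v ⟨hvU, hv⟩
  have hle : v ≤ Function.update v i 1 := le_update_self_iff.2 (corners_subset_cube hv i).2
  exact subset_convexHull ℝ _ ⟨hU hle hvU, update_one_mem_corners hv i⟩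

lemma update_mem_integerHull (hU : IsUpperSet U) {x : Fin n → ℝ} (hx : x ∈ integerHull n U)
    {i : Fin n} {t : ℝ} (hxt : x i ≤ t) (ht : t ≤ 1) :
    Function.update x i t ∈ integerHull n U := by
  have ht' : t ∈ segment ℝ (x i) 1 := by
    rw [segment_eq_Icc (hxt.trans ht)]
    exact ⟨hxt, ht⟩
  have hseg : Function.update x i t ∈ segment ℝ x (Function.update x i 1) := by
    simpa only [Pi.image_update_segment, Function.update_eq_self] using
      mem_image_of_mem (Function.update x i) ht'
  exact (convex_convexHull ℝ _).segment_subset hx (update_one_mem_integerHull hU hx i) hseg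

lemma mem_integerHull_of_le (hU : IsUpperSet U) {x y : Fin n → ℝ} (hx : x ∈ integerHull n U)
    (hxy : x ≤ y) (hy : y ∈ cube n) : y ∈ integerHull n U := by
  suffices h : ∀ T : Finset (Fin n), T.piecewise y x ∈ integerHull n U by
    simpa using h Finset.univ
  intro T
  induction T using Finset.induction_on with
  | empty => simpa using hx
  | insert i T hi ih =>
    rw [Finset.piecewise_insert]
    exact update_mem_integerHull hU ih (by simpa [hi] using hxy i) (hy i).2

lemma integerHull_cube_inter : integerHull n (cube n ∩ U) = integerHull n U := by
  rw [integerHull, integerHull, inter_right_comm, inter_eq_right.2 corners_subset_cube, inter_comm]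

end UpperSet

section TruncatedCube

/-- The cube with its corner at the origin cut off by the inequality `δ ≤ ∑ j, x j`. For
`δ = 1 / 2` this is the no-good polytope of the origin. -/
def truncatedCube (n : ℕ) (δ : ℝ) : Set (Fin n → ℝ) :=
  {x ∈ cube n | δ ≤ ∑ j, x j}

variable {n : ℕ} {δ : ℝ}

lemma single_one_mem_truncatedCube (hδ : δ ≤ 1) (i : Fin n) :
    Pi.single i 1 ∈ truncatedCube n δ :=
  ⟨corners_subset_cube (single_one_mem_corners i), by simpa using hδ⟩

lemma convex_truncatedCube : Convex ℝ (truncatedCube n δ) := by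
  have hlin : IsLinearMap ℝ fun x : Fin n → ℝ ↦ ∑ j, x j :=
    ⟨fun x y ↦ Finset.sum_add_distrib, fun c x ↦ (Finset.mul_sum ..).symm⟩
  have hcube : Convex ℝ (cube n) := cube_eq_Icc ▸ convex_Icc 0 1
  exact hcube.inter (convex_halfSpace_ge hlin δ)

lemma truncatedCube_inter_corners_subset (hδ : 0 < δ) :
    truncatedCube n δ ∩ corners n ⊆ truncatedCube n 1 := by
  rintro v ⟨⟨hv, hsum⟩, hcorner⟩
  obtain ⟨i, -, hi⟩ : ∃ i ∈ Finset.univ, v i ≠ 0 :=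
    Finset.exists_ne_zero_of_sum_ne_zero (hδ.trans_le hsum).ne'
  have hle : v i ≤ ∑ j, v j := Finset.single_le_sum (fun j _ ↦ (hv j).1) (Finset.mem_univ i)
  exact ⟨hv, ((hcorner i).resolve_left hi).symm.trans_le hle⟩

lemma stdSimplex_subset_integerHull_truncatedCube (hδ : δ ≤ 1) :
    stdSimplex ℝ (Fin n) ⊆ integerHull n (truncatedCube n δ) := by
  rw [← convexHull_rangle_single_eq_stdSimplex]
  refine convexHull_mono ?_
  rintro _ ⟨i, rfl⟩
  exact ⟨single_one_mem_truncatedCube hδ i, single_one_mem_corners i⟩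

lemma exists_mem_stdSimplex_le {ι : Type*} [Fintype ι] {x : ι → ℝ} (hx : 0 ≤ x)
    (hsum : 1 ≤ ∑ j, x j) : ∃ y ∈ stdSimplex ℝ ι, y ≤ x := by
  have hpos : 0 < ∑ j, x j := one_pos.trans_le hsum
  refine ⟨fun j ↦ x j / ∑ j, x j, ⟨fun j ↦ div_nonneg (hx j) hpos.le, ?_⟩,
    fun j ↦ div_le_self (hx j) hsum⟩
  rw [← Finset.sum_div, div_self hpos.ne']

lemma integerHull_truncatedCube (hδ₀ : 0 < δ) (hδ₁ : δ ≤ 1) :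
    integerHull n (truncatedCube n δ) = truncatedCube n 1 := by
  refine Subset.antisymm
    (convexHull_min (truncatedCube_inter_corners_subset hδ₀) convex_truncatedCube) ?_
  rintro x ⟨hx, hsum⟩
  obtain ⟨y, hy, hyx⟩ := exists_mem_stdSimplex_le (fun j ↦ (hx j).1) hsum
  have hU : IsUpperSet {x : Fin n → ℝ | δ ≤ ∑ j, x j} :=
    fun _ _ hle h ↦ h.trans (Finset.sum_le_sum fun j _ ↦ hle j)
  have hhull : integerHull n (truncatedCube n δ) = integerHull n {x | δ ≤ ∑ j, x j} :=
    integerHull_cube_inter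
  have hyhull := stdSimplex_subset_integerHull_truncatedCube hδ₁ hy
  rw [hhull] at hyhull ⊢
  exact mem_integerHull_of_le hU hyhull hyx hx

end TruncatedCube

section Iterates

variable {n : ℕ} {s : ℝ}

lemma inter_corners_subset_Lk (P : Set (Fin n → ℝ)) (k : ℕ) : P ∩ corners n ⊆ Lk n k P := by
  rintro v ⟨hvP, hv⟩
  induction k with
  | zero => exact hvP
  | succ k ih =>
    exact mem_iInter.2 fun i ↦ subset_convexHull ℝ _ <|
      (hv i).imp (fun h ↦ ⟨ih, h⟩) (fun h ↦ ⟨ih, h⟩)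

/-- The point whose coordinates in `T` all equal `1 / (|T| + s)` and whose other coordinates vanish;
for `0 < s` it violates `1 ≤ ∑ j, x j` and is used to show that this inequality is not valid for the
iterates of the lift-and-project operator. -/
noncomputable def flatPoint (s : ℝ) (T : Finset (Fin n)) : Fin n → ℝ :=
  fun j ↦ if j ∈ T then ((T.card : ℝ) + s)⁻¹ else 0

lemma sum_flatPoint (s : ℝ) (T : Finset (Fin n)) :
    ∑ j, flatPoint s T j = T.card / ((T.card : ℝ) + s) := by
  simp [flatPoint, div_eq_mul_inv]

lemma flatPoint_eq_combo (hs : 0 < s) {T : Finset (Fin n)} {i : Fin n} (hi : i ∈ T) :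
    flatPoint s T = (1 - ((T.card : ℝ) + s)⁻¹) • flatPoint s (T.erase i) +
      ((T.card : ℝ) + s)⁻¹ • Pi.single i 1 := by
  have hcard : (T.card : ℝ) = (T.erase i).card + 1 := by
    exact_mod_cast (Finset.card_erase_add_one hi).symm
  have hpos : 0 < ((T.erase i).card : ℝ) + s := by positivity
  ext j
  rcases eq_or_ne j i with rfl | hji
  · simp [flatPoint, hi]
  by_cases hj : j ∈ T
  · simp only [flatPoint, hj, hji, hcard, Pi.add_apply, Pi.smul_apply, smul_eq_mul,
      Finset.mem_erase, ne_eq, not_false_eq_true, and_self, if_true, Pi.single_eq_of_ne,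
      mul_zero, add_zero]
    field_simp
    ring
  · simp [flatPoint, hj, hji]

lemma combo_mem_convexHull_faces {Q : Set (Fin n → ℝ)} {x y : Fin n → ℝ} {i : Fin n} {c : ℝ}
    (hx : x ∈ Q) (hxi : x i = 0) (hy : y ∈ Q) (hyi : y i = 1) (hc₀ : 0 ≤ c) (hc₁ : c ≤ 1) :
    (1 - c) • x + c • y ∈ convexHull ℝ ((Q ∩ {z | z i = 0}) ∪ (Q ∩ {z | z i = 1})) := by
  have hface₀ := subset_convexHull ℝ ((Q ∩ {z | z i = 0}) ∪ (Q ∩ {z | z i = 1})) (.inl ⟨hx, hxi⟩)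
  have hface₁ := subset_convexHull ℝ ((Q ∩ {z | z i = 0}) ∪ (Q ∩ {z | z i = 1})) (.inr ⟨hy, hyi⟩)
  exact convex_convexHull ℝ _ hface₀ hface₁ (sub_nonneg.2 hc₁) hc₀ (sub_add_cancel 1 c)

lemma flatPoint_mem_Lk {P : Set (Fin n → ℝ)} (hs : 0 < s) (hsingle : ∀ i, Pi.single i 1 ∈ P)
    (hflat : ∀ T : Finset (Fin n), T.Nonempty → flatPoint s T ∈ P) {k : ℕ}
    {T : Finset (Fin n)} (hT : k < T.card) : flatPoint s T ∈ Lk n k P := by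
  induction k generalizing T with
  | zero => exact hflat T (Finset.card_pos.1 hT)
  | succ k ih =>
    refine mem_iInter.2 fun i ↦ ?_
    by_cases hi : i ∈ T
    · have herase : flatPoint s (T.erase i) ∈ Lk n k P :=
        ih (by rw [Finset.card_erase_of_mem hi]; omega)
      have hunit : Pi.single i 1 ∈ Lk n k P :=
        inter_corners_subset_Lk P k ⟨hsingle i, single_one_mem_corners i⟩
      have hcard : (1 : ℝ) ≤ T.card := by exact_mod_cast (Nat.succ_pos k).trans hT
      have hle : ((T.card : ℝ) + s)⁻¹ ≤ 1 := inv_le_one_of_one_le₀ (by linarith)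
      rw [flatPoint_eq_combo hs hi]
      exact combo_mem_convexHull_faces herase (by simp [flatPoint]) hunit (by simp)
        (by positivity) hle
    · exact subset_convexHull ℝ _ (Or.inl ⟨ih (by omega), by simp [flatPoint, hi]⟩)

lemma flatPoint_mem_truncatedCube (hs : 0 ≤ s) {T : Finset (Fin n)} (hT : T.Nonempty) :
    flatPoint s T ∈ truncatedCube n (1 + s)⁻¹ := by
  have hcard : (1 : ℝ) ≤ T.card := by exact_mod_cast hT.card_pos
  refine ⟨fun j ↦ ?_, ?_⟩
  · unfold flatPoint
    split_ifs
    · exact ⟨by positivity, inv_le_one_of_one_le₀ (by linarith)⟩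
    · exact ⟨le_rfl, zero_le_one⟩
  · rw [sum_flatPoint, inv_eq_one_div, div_le_div_iff₀ (by linarith) (by linarith)]
    nlinarith

lemma exists_mem_Lk_truncatedCube_sum_lt_one (hn : 0 < n) {δ : ℝ} (hδ₀ : 0 < δ) (hδ₁ : δ < 1) :
    ∃ x ∈ Lk n (n - 1) (truncatedCube n δ), ∑ j, x j < 1 := by
  obtain ⟨s, hs, rfl⟩ : ∃ s, 0 < s ∧ (1 + s)⁻¹ = δ :=
    ⟨δ⁻¹ - 1, sub_pos.2 ((one_lt_inv₀ hδ₀).2 hδ₁), by simp⟩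
  refine ⟨flatPoint s Finset.univ, flatPoint_mem_Lk hs (single_one_mem_truncatedCube hδ₁.le)
    (fun T hT ↦ flatPoint_mem_truncatedCube hs.le hT) ?_, ?_⟩
  · simpa using hn
  · rw [sum_flatPoint, div_lt_one (by positivity)]
    exact lt_add_of_pos_right _ hs

end Iterates

theorem stmt11_general {n : ℕ} (hn : 0 < n) {δ : ℝ} (hδ₀ : 0 < δ) (hδ₁ : δ < 1) :
    integerHull n (truncatedCube n δ) = truncatedCube n 1 ∧
    (∃ x ∈ Lk n (n - 1) (truncatedCube n δ), ∑ j, x j < 1) ∧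
    Lk n (n - 1) (truncatedCube n δ) ≠ integerHull n (truncatedCube n δ) := by
  have hhull : integerHull n (truncatedCube n δ) = truncatedCube n 1 :=
    integerHull_truncatedCube hδ₀ hδ₁.le
  obtain ⟨x, hx, hsum⟩ := exists_mem_Lk_truncatedCube_sum_lt_one hn hδ₀ hδ₁
  refine ⟨hhull, ⟨x, hx, hsum⟩, fun heq ↦ ?_⟩
  rw [heq, hhull] at hx
  exact hsum.not_ge hx.2

theorem stmt11 (n : ℕ) (hn : 2 ≤ n)
    (P : Set (Fin n → ℝ)) (hP : P = {x ∈ cube n | (1 : ℝ) / 2 ≤ ∑ j, x j}) :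
    integerHull n P = {x ∈ cube n | (1 : ℝ) ≤ ∑ j, x j} ∧
    (∃ xbar ∈ Lk n (n - 1) P, ∑ j, xbar j < 1) ∧
    Lk n (n - 1) P ≠ integerHull n P := by
  subst hP
  exact stmt11_general (by omega) one_half_pos one_half_lt_one
end
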